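/- Let ℓ be an odd prime different from char(K) and suppose ζ_ℓ ∉ K and ζ_ℓ ∈ Γ. Let ε ≥ 1 be the largest integer such that ζ_{ℓ^ε} ∈ Γ ∩ K(ζ_ℓ). Then [K(Γ_ℓ) : K(ζ_ℓ)] = |Γ_ℓ : K^×| · ℓ^{-ε} and the index of K^× in Γ_ℓ ∩ K(ζ_ℓ)^× equals ℓ^ε. -/

import Mathlib

noncomputable section

open IntermediateField

/-- `K^×` viewed as a subgroup of the units of the algebraic closure of `K`. -/
def baseUnits (K : Type*) [Field K] : Subgroup (AlgebraicClosure K)ˣ :=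
  (Units.map (algebraMap K (AlgebraicClosure K)).toMonoidHom).range

/-- The subgroup of `(AlgebraicClosure K)ˣ` of elements whose `m`-th power lies in `K^×`. -/
def radGroup (K : Type*) [Field K] (m : ℕ) : Subgroup (AlgebraicClosure K)ˣ where
  carrier := {x | ∃ y : K, algebraMap K (AlgebraicClosure K) y = (x : AlgebraicClosure K) ^ m}
  one_mem' := ⟨1, by simp⟩
  mul_mem' := by
    rintro a b ⟨y, hy⟩ ⟨z, hz⟩
    exact ⟨y * z, by rw [map_mul, hy, hz, Units.val_mul, mul_pow]⟩
  inv_mem' := by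
    rintro a ⟨y, hy⟩
    refine ⟨y⁻¹, ?_⟩
    rw [map_inv₀, hy, Units.val_inv_eq_inv_val, inv_pow]

lemma radGroup_le (K : Type*) [Field K] {m k : ℕ} :
    radGroup K m ≤ radGroup K (m * k) := by
  rintro x ⟨y, hy⟩
  exact ⟨y ^ k, by rw [map_pow, hy, ← pow_mul]⟩

/-- The group `√[ℓ^∞]{K^×}` of radicals of `ℓ`-power order over `K`. -/
def radInf (K : Type*) [Field K] (ℓ : ℕ) : Subgroup (AlgebraicClosure K)ˣ where
  carrier := {x | ∃ n : ℕ, x ∈ radGroup K (ℓ ^ n)}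
  one_mem' := ⟨0, one_mem _⟩
  mul_mem' := by
    rintro a b ⟨n, ha⟩ ⟨m, hb⟩
    refine ⟨n + m, mul_mem ?_ ?_⟩
    · have h : radGroup K (ℓ ^ n) ≤ radGroup K (ℓ ^ (n + m)) := by
        rw [pow_add]; exact radGroup_le K
      exact h ha
    · have h : radGroup K (ℓ ^ m) ≤ radGroup K (ℓ ^ (n + m)) := by
        rw [add_comm, pow_add]; exact radGroup_le K
      exact h hb
  inv_mem' := by
    rintro a ⟨n, ha⟩
    exact ⟨n, inv_mem ha⟩

/-- The units of the algebraic closure lying in an intermediate field `F`, as a subgroup. -/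
def unitsIn {K : Type*} [Field K] (F : IntermediateField K (AlgebraicClosure K)) :
    Subgroup (AlgebraicClosure K)ˣ where
  carrier := {x | (x : AlgebraicClosure K) ∈ F}
  one_mem' := by
    show ((1 : (AlgebraicClosure K)ˣ) : AlgebraicClosure K) ∈ F
    simpa using one_mem F
  mul_mem' := by
    intro a b ha hb
    show ((a * b : (AlgebraicClosure K)ˣ) : AlgebraicClosure K) ∈ F
    rw [Units.val_mul]
    exact mul_mem ha hb
  inv_mem' := by
    intro x hx
    show ((x⁻¹ : (AlgebraicClosure K)ˣ) : AlgebraicClosure K) ∈ F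
    rw [Units.val_inv_eq_inv_val]
    exact inv_mem hx

/-- `K(ζ_{2𝒫})`: the extension of `K` generated by all roots of unity whose order is `4` or
an odd prime, and not divisible by the characteristic of `K`. -/
def cyclo2P (K : Type*) [Field K] : IntermediateField K (AlgebraicClosure K) :=
  IntermediateField.adjoin K
    {x : AlgebraicClosure K |
      ∃ n : ℕ, (n = 4 ∨ (n.Prime ∧ Odd n)) ∧ ¬ (ringChar K ∣ n) ∧ IsPrimitiveRoot x n}

/-- The set of roots of unity of order exactly `n` in the algebraic closure of `K`. -/
def primRoots (K : Type*) [Field K] (n : ℕ) : Set (AlgebraicClosure K) :=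
  {x | IsPrimitiveRoot x n}

/-- The set of roots of unity of order `ℓ^n` for `n ≤ t` (all of them if `t = ∞`). -/
def pPowRoots (K : Type*) [Field K] (ℓ : ℕ) (t : ℕ∞) : Set (AlgebraicClosure K) :=
  {x | ∃ n : ℕ, (n : ℕ∞) ≤ t ∧ IsPrimitiveRoot x (ℓ ^ n)}

/-- The set of units that are roots of unity of order `ℓ^n` for `n ≤ t`. -/
def pPowRootsUnits (K : Type*) [Field K] (ℓ : ℕ) (t : ℕ∞) : Set (AlgebraicClosure K)ˣ :=
  {x | ∃ n : ℕ, (n : ℕ∞) ≤ t ∧ IsPrimitiveRoot (x : AlgebraicClosure K) (ℓ ^ n)}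

/-
The field `L = K(ζ_ℓ)` has degree prime to `ℓ` over `K`, so the norm of `L / K` shows that an
element of `K` which is an `ℓ ^ n`-th power in `L` already is one in `K`. Hence every element of
`Γ_ℓ ∩ L^×` is the product of an element of `K^×` and a root of unity of `ℓ`-power order, which
gives the index `ℓ ^ ε`. The degree `[K(Γ_ℓ) : L]` equals `|Γ_ℓ L^× : L^×|` by a trace argument:
over `L` a radical outside `L^×` has a binomial minimal polynomial, hence trace zero, whereas `1`
has nonzero trace because the trace form of a separable extension does not vanish; multiplying a
linear relation between representatives of distinct cosets by the inverse of one of them and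
taking traces isolates its coefficient. The group `W` does not contribute, its elements having
order prime to `ℓ`.
-/

section ScalarUnits

/-- The image of `Rˣ` in `Aˣ`. For a field extension `A / R` it is the group written `R^×`
inside `A^×`. -/
def scalarUnits (R A : Type*) [CommSemiring R] [Semiring A] [Algebra R A] : Subgroup Aˣ :=
  (Units.map (algebraMap R A : R →* A)).range

variable {F Ω : Type*} [Field F] [Field Ω] [Algebra F Ω]

lemma mem_scalarUnits {u : Ωˣ} :
    u ∈ scalarUnits F Ω ↔ (u : Ω) ∈ Set.range (algebraMap F Ω) := by
  constructor
  · rintro ⟨v, rfl⟩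
    exact ⟨v, rfl⟩
  · rintro ⟨a, ha⟩
    have ha0 : a ≠ 0 := by
      rintro rfl
      exact u.ne_zero (by rw [← ha, map_zero])
    exact ⟨Units.mk0 a ha0, Units.ext ha⟩

lemma mem_scalarUnits_intermediateField {L : IntermediateField F Ω} {u : Ωˣ} :
    u ∈ scalarUnits L Ω ↔ (u : Ω) ∈ L :=
  mem_scalarUnits.trans (by simp)

lemma scalarUnits_le_scalarUnits (L : IntermediateField F Ω) :
    scalarUnits F Ω ≤ scalarUnits L Ω := by
  rintro _ ⟨v, rfl⟩
  exact mem_scalarUnits_intermediateField.2 (L.algebraMap_mem v)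

end ScalarUnits

section TraceIndependence

variable {F L G : Type*} [Field F] [Group G] {N : Subgroup G}

section CommRing

variable [CommRing L] [Algebra F L] {f : G →* L}

lemma span_range_quotient_out (hN : ∀ g ∈ N, f g ∈ Set.range (algebraMap F L)) :
    Submodule.span F (Set.range fun q : G ⧸ N ↦ f q.out) = Submodule.span F (Set.range f) := by
  refine le_antisymm (Submodule.span_mono (Set.range_comp_subset_range Quotient.out f))
    (Submodule.span_le.2 ?_)
  rintro _ ⟨g, rfl⟩
  let q : G ⧸ N := QuotientGroup.mk g
  have hq : q.out⁻¹ * g ∈ N := QuotientGroup.eq.1 q.out_eq'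
  obtain ⟨c, hc⟩ := hN _ hq
  have hg : f g = c • f q.out := by
    rw [Algebra.smul_def, hc, mul_comm, ← map_mul, mul_inv_cancel_left]
  rw [hg]
  exact Submodule.smul_mem _ c (Submodule.subset_span ⟨q, rfl⟩)

lemma finiteDimensional_of_span_range_eq_top [N.FiniteIndex]
    (hN : ∀ g ∈ N, f g ∈ Set.range (algebraMap F L))
    (hspan : Submodule.span F (Set.range f) = ⊤) : FiniteDimensional F L := by
  have hreps := (span_range_quotient_out hN).trans hspan
  exact .of_fg_top (hreps ▸ Submodule.fg_span (Set.finite_range _))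

lemma linearIndependent_quotient_out (h1 : Algebra.trace F L 1 ≠ 0)
    (htr : ∀ g ∉ N, Algebra.trace F L (f g) = 0) :
    LinearIndependent F fun q : G ⧸ N ↦ f q.out := by
  rw [linearIndependent_iff']
  intro s c hc p hp
  have htrace : ∀ q : G ⧸ N, q ≠ p → Algebra.trace F L (f (p.out⁻¹ * q.out)) = 0 := by
    refine fun q hqp ↦ htr _ fun hmem ↦ hqp ?_
    simpa only [QuotientGroup.out_eq'] using (QuotientGroup.eq.2 hmem).symm
  have hsum : ∑ q ∈ s, c q • f (p.out⁻¹ * q.out) = 0 := by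
    simp only [map_mul, ← mul_smul_comm, ← Finset.mul_sum, hc, mul_zero]
  have hcp : c p * Algebra.trace F L 1 = 0 := by
    have := congrArg (Algebra.trace F L) hsum
    rwa [map_sum, Finset.sum_eq_single_of_mem p hp fun q _ hqp ↦ by
      rw [map_smul, htrace q hqp, smul_zero], inv_mul_cancel, map_one, map_smul, map_zero] at this
  exact (mul_eq_zero.1 hcp).resolve_right h1

end CommRing

variable [Field L] [Algebra F L] {f : G →* L}

lemma trace_one_ne_zero_of_span_eq_top [FiniteDimensional F L] [Algebra.IsSeparable F L]
    (hN : ∀ g ∈ N, f g ∈ Set.range (algebraMap F L))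
    (htr : ∀ g ∉ N, Algebra.trace F L (f g) = 0)
    (hspan : Submodule.span F (Set.range f) = ⊤) :
    Algebra.trace F L 1 ≠ 0 := by
  intro h1
  refine Algebra.trace_ne_zero F L (LinearMap.ext_on_range hspan fun g ↦ ?_)
  by_cases hg : g ∈ N
  · obtain ⟨c, hc⟩ := hN g hg
    rw [← hc, Algebra.algebraMap_eq_smul_one, map_smul, h1, smul_zero, LinearMap.zero_apply]
  · exact htr g hg

theorem finrank_eq_index_of_trace_eq_zero [N.FiniteIndex] [Algebra.IsSeparable F L]
    (hN : ∀ g ∈ N, f g ∈ Set.range (algebraMap F L))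
    (htr : ∀ g ∉ N, Algebra.trace F L (f g) = 0)
    (hspan : Submodule.span F (Set.range f) = ⊤) :
    Module.finrank F L = N.index := by
  have hreps : Submodule.span F (Set.range fun q : G ⧸ N ↦ f q.out) = ⊤ :=
    (span_range_quotient_out hN).trans hspan
  have := finiteDimensional_of_span_range_eq_top hN hspan
  have hli := linearIndependent_quotient_out
    (trace_one_ne_zero_of_span_eq_top hN htr hspan) htr
  exact Module.finrank_eq_nat_card_basis (Module.Basis.mk hli hreps.ge)

end TraceIndependence

section Kneser

variable {F Ω : Type*} [Field F] [Field Ω] [Algebra F Ω]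

open Polynomial in
theorem minpoly_eq_X_pow_orderOf_sub_C {u : Ωˣ} {a : F}
    (hodd : Odd (orderOf (u : Ωˣ ⧸ scalarUnits F Ω)))
    (hζ : ∀ p : ℕ, p.Prime → p ∣ orderOf (u : Ωˣ ⧸ scalarUnits F Ω) →
      ∃ ζ : F, IsPrimitiveRoot ζ p)
    (ha : (u : Ω) ^ orderOf (u : Ωˣ ⧸ scalarUnits F Ω) = algebraMap F Ω a) :
    minpoly F (u : Ω) = X ^ orderOf (u : Ωˣ ⧸ scalarUnits F Ω) - C a := by
  set n := orderOf (u : Ωˣ ⧸ scalarUnits F Ω)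
  have hirr : Irreducible (X ^ n - C a) := by
    refine X_pow_sub_C_irreducible_of_odd hodd fun p hp hpn b hb ↦ ?_
    obtain ⟨ζ, hζ⟩ := hζ p hp hpn
    have : NeZero p := ⟨hp.ne_zero⟩
    obtain ⟨k, hk⟩ := hpn
    have hroot : ((u : Ω) ^ k / algebraMap F Ω b) ^ p = 1 := by
      have hpow : (u : Ω) ^ n ≠ 0 := pow_ne_zero n u.ne_zero
      rw [div_pow, ← pow_mul, mul_comm, ← hk, ← map_pow, hb, ← ha, div_self hpow]
    have hb0 : algebraMap F Ω b ≠ 0 := fun h0 ↦ by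
      rw [h0, div_zero, zero_pow hp.ne_zero] at hroot
      exact zero_ne_one hroot
    obtain ⟨i, -, hi⟩ :=
      (hζ.map_of_injective (algebraMap F Ω).injective).eq_pow_of_pow_eq_one hroot
    have huk : u ^ k ∈ scalarUnits F Ω :=
      mem_scalarUnits.2 ⟨ζ ^ i * b, by
        rw [map_mul, map_pow, hi, div_mul_cancel₀ _ hb0, Units.val_pow_eq_pow_val]⟩
    have hnk : n ∣ k := orderOf_dvd_of_pow_eq_one ((QuotientGroup.eq_one_iff _).2 huk)
    have hk0 : 0 < k := Nat.pos_of_mul_pos_left (hk ▸ hodd.pos)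
    exact (lt_mul_of_one_lt_left hk0 hp.one_lt).not_ge (hk ▸ Nat.le_of_dvd hk0 hnk)
  refine (minpoly.eq_of_irreducible_of_monic hirr (by simp [ha]) ?_).symm
  exact monic_X_pow_sub_C a hodd.pos.ne'

open Polynomial in
theorem nextCoeff_minpoly_eq_zero {u : Ωˣ} {n : ℕ} (hn : Odd n)
    (hζ : ∀ p : ℕ, p.Prime → p ∣ n → ∃ ζ : F, IsPrimitiveRoot ζ p)
    (hun : u ^ n ∈ scalarUnits F Ω) (hu : u ∉ scalarUnits F Ω) :
    (minpoly F (u : Ω)).nextCoeff = 0 := by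
  set k := orderOf (u : Ωˣ ⧸ scalarUnits F Ω) with hk
  have hkn : k ∣ n := orderOf_dvd_of_pow_eq_one ((QuotientGroup.eq_one_iff _).2 hun)
  have hk1 : k ≠ 1 := fun h ↦ hu ((QuotientGroup.eq_one_iff _).1 (orderOf_eq_one_iff.1 h))
  have hkodd : Odd k := hn.of_dvd_nat hkn
  obtain ⟨a, ha⟩ := mem_scalarUnits.1
    ((QuotientGroup.eq_one_iff (u ^ k)).1 (pow_orderOf_eq_one (u : Ωˣ ⧸ scalarUnits F Ω)))
  rw [minpoly_eq_X_pow_orderOf_sub_C hkodd (fun p hp hpk ↦ hζ p hp (hpk.trans hkn)) ha.symm, ← hk,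
    nextCoeff_of_natDegree_pos (by simpa using hkodd.pos), natDegree_X_pow_sub_C]
  have hk0 : k - 1 ≠ 0 := by grind
  have hkk : k - 1 ≠ k := by grind
  rw [coeff_sub, coeff_X_pow, coeff_C, if_neg hkk, if_neg hk0, sub_zero]

lemma isSeparable_of_pow_mem_scalarUnits {u : Ωˣ} {n : ℕ} (hn : (n : F) ≠ 0)
    (hu : u ^ n ∈ scalarUnits F Ω) : IsSeparable F (u : Ω) := by
  obtain ⟨a, ha⟩ := hu
  have haeval : Polynomial.aeval (u : Ω) (Polynomial.X ^ n - Polynomial.C (a : F)) = 0 := by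
    have hau : algebraMap F Ω a = (u : Ω) ^ n := congrArg Units.val ha
    simp [hau]
  exact (Polynomial.separable_X_pow_sub_C (a : F) hn a.ne_zero).of_dvd (minpoly.dvd F _ haeval)

lemma natCast_ne_zero_of_forall_isPrimitiveRoot {n : ℕ} (hn : n ≠ 0)
    (hζ : ∀ p : ℕ, p.Prime → p ∣ n → ∃ ζ : F, IsPrimitiveRoot ζ p) : (n : F) ≠ 0 := by
  induction n using Nat.recOnMul with
  | zero => exact absurd rfl hn
  | one => simp
  | prime p hp =>
    obtain ⟨ζ, hζ⟩ := hζ p hp dvd_rfl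
    have : NeZero p := ⟨hp.ne_zero⟩
    exact hζ.neZero'.ne
  | mul a b iha ihb =>
    rw [Nat.cast_mul]
    exact mul_ne_zero
      (iha (left_ne_zero_of_mul hn) fun p hp hpa ↦ hζ p hp (hpa.mul_right b))
      (ihb (right_ne_zero_of_mul hn) fun p hp hpb ↦ hζ p hp (hpb.mul_left a))

/-- The inclusion of a group `H` of units in the field `F(H)`. -/
def toAdjoin (F : Type*) {Ω : Type*} [Field F] [Field Ω] [Algebra F Ω] (H : Subgroup Ωˣ) :
    H →* adjoin F (Units.val '' (H : Set Ωˣ)) :=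
  ((Units.coeHom Ω).comp H.subtype).codRestrict _
    fun h ↦ subset_adjoin F _ (Set.mem_image_of_mem _ h.2)

lemma span_range_toAdjoin {H : Subgroup Ωˣ} (hH : ∀ u ∈ H, IsAlgebraic F (u : Ω)) :
    Submodule.span F (Set.range (toAdjoin F H)) = ⊤ := by
  have hclosure : Submonoid.closure (Units.val '' (H : Set Ωˣ)) =
      H.toSubmonoid.map (Units.coeHom Ω) :=
    Submonoid.closure_eq (H.toSubmonoid.map (Units.coeHom Ω))
  let ι := (adjoin F (Units.val '' (H : Set Ωˣ))).val.toLinearMap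
  have himage : ι '' Set.range (toAdjoin F H) = Units.val '' (H : Set Ωˣ) := by
    ext x
    constructor
    · rintro ⟨_, ⟨u, rfl⟩, rfl⟩
      exact ⟨u, u.2, rfl⟩
    · rintro ⟨u, hu, rfl⟩
      exact ⟨_, ⟨⟨u, hu⟩, rfl⟩, rfl⟩
  have halg : Algebra.adjoin F (Units.val '' (H : Set Ωˣ)) =
      (adjoin F (Units.val '' (H : Set Ωˣ))).toSubalgebra :=
    (adjoin_toSubalgebra_of_isAlgebraic (by rintro _ ⟨u, hu, rfl⟩; exact hH u hu)).symm
  have hrange : ι.range = Submodule.span F (Units.val '' (H : Set Ωˣ)) := by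
    have hspan := Algebra.adjoin_eq_span F (Units.val '' (H : Set Ωˣ))
    rw [halg, hclosure] at hspan
    exact (Submodule.range_subtype _).trans hspan
  refine Submodule.map_injective_of_injective (f := ι) Subtype.val_injective ?_
  rw [Submodule.map_span, himage, Submodule.map_top, hrange]

theorem finrank_adjoin_eq_relIndex {H : Subgroup Ωˣ}
    (hodd : Odd ((scalarUnits F Ω).relIndex H))
    (hζ : ∀ p : ℕ, p.Prime → p ∣ (scalarUnits F Ω).relIndex H → ∃ ζ : F, IsPrimitiveRoot ζ p) :
    Module.finrank F (adjoin F (Units.val '' (H : Set Ωˣ))) = (scalarUnits F Ω).relIndex H := by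
  set n := (scalarUnits F Ω).relIndex H
  have hpow : ∀ u ∈ H, u ^ n ∈ scalarUnits F Ω := fun u hu ↦ Subgroup.pow_relIndex_mem _ hu
  have hsep : ∀ u ∈ H, IsSeparable F (u : Ω) := fun u hu ↦ isSeparable_of_pow_mem_scalarUnits
    (natCast_ne_zero_of_forall_isPrimitiveRoot hodd.pos.ne' hζ) (hpow u hu)
  have : Algebra.IsSeparable F (adjoin F (Units.val '' (H : Set Ωˣ))) :=
    (isSeparable_adjoin_iff_isSeparable F Ω).2 (by rintro _ ⟨u, hu, rfl⟩; exact hsep u hu)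
  have : ((scalarUnits F Ω).subgroupOf H).FiniteIndex := ⟨hodd.pos.ne'⟩
  have hscalar : ∀ u ∈ (scalarUnits F Ω).subgroupOf H,
      toAdjoin F H u ∈ Set.range (algebraMap F _) := fun u hu ↦ by
    obtain ⟨a, ha⟩ := mem_scalarUnits.1 (Subgroup.mem_subgroupOf.1 hu)
    exact ⟨a, Subtype.ext ha⟩
  have hspan : Submodule.span F (Set.range (toAdjoin F H)) = ⊤ :=
    span_range_toAdjoin fun u hu ↦ (hsep u hu).isIntegral.isAlgebraic
  have := finiteDimensional_of_span_range_eq_top hscalar hspan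
  refine finrank_eq_index_of_trace_eq_zero hscalar (fun u hu ↦ ?_) hspan
  have hmin : minpoly F (toAdjoin F H u) = minpoly F ((u : Ωˣ) : Ω) :=
    IntermediateField.minpoly_eq _
  rw [trace_eq_finrank_mul_minpoly_nextCoeff, hmin,
    nextCoeff_minpoly_eq_zero hodd hζ (hpow u u.2) hu, neg_zero, mul_zero]

end Kneser

section RootsOfUnity

variable {K Ω : Type*} [Field K] [Field Ω] [Algebra K Ω]

lemma exists_orderOf_pow_eq_prime_pow {G : Type*} [Monoid G] {z : G} {ℓ n e : ℕ} (hℓ : ℓ.Prime)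
    (hn : z ^ ℓ ^ n = 1) (he : z ^ ℓ ^ e ≠ 1) : ∃ j, orderOf (z ^ j) = ℓ ^ (e + 1) := by
  obtain ⟨k, -, hk⟩ := (Nat.dvd_prime_pow hℓ).1 (orderOf_dvd_of_pow_eq_one hn)
  have hek : e + 1 ≤ k := by
    by_contra! hke
    exact he (orderOf_dvd_iff_pow_eq_one.1 (hk ▸ pow_dvd_pow ℓ (by omega)))
  have hz : orderOf z ≠ 0 := hk ▸ pow_ne_zero k hℓ.ne_zero
  exact ⟨_, orderOf_pow_orderOf_div hz (hk ▸ pow_dvd_pow ℓ hek)⟩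

lemma orderOf_coprime_of_mem_closure {G : Type*} [CommGroup G] {S : Set G} {n : ℕ}
    (hS : ∀ x ∈ S, (orderOf x).Coprime n) {w : G} (hw : w ∈ Subgroup.closure S) :
    (orderOf w).Coprime n := by
  induction hw using Subgroup.closure_induction with
  | mem x hx => exact hS x hx
  | one => simp
  | mul x y _ _ hx hy =>
    exact (hx.mul_left hy).coprime_dvd_left (Commute.all x y).orderOf_mul_dvd_mul_orderOf
  | inv x _ hx => rwa [orderOf_inv]

lemma mem_of_mem_sup_of_orderOf_coprime {G : Type*} [CommGroup G] {W Γ : Subgroup G} {z : G}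
    (hW : ∀ w ∈ W, (orderOf w).Coprime (orderOf z)) (hz : z ∈ W ⊔ Γ) : z ∈ Γ := by
  obtain ⟨w, hw, g, hg, rfl⟩ := Subgroup.mem_sup.1 hz
  obtain ⟨m, hm⟩ := exists_pow_eq_self_of_coprime (hW w hw)
  rw [mul_pow, pow_orderOf_eq_one, one_mul] at hm
  exact hm ▸ pow_mem (pow_mem hg _) m

lemma mem_of_isPrimitiveRoot_of_mem_sup {M : Type*} [CommMonoid M] {N W Γ : Subgroup Mˣ} {z : Mˣ}
    {ℓ n : ℕ} (hNΓ : N ≤ Γ) (hW : ∀ w ∈ W, (orderOf w).Coprime ℓ)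
    (hz : IsPrimitiveRoot (z : M) (ℓ ^ n)) (hzsup : z ∈ N ⊔ W ⊔ Γ) : z ∈ Γ := by
  rw [sup_right_comm, sup_of_le_right hNΓ, sup_comm] at hzsup
  refine mem_of_mem_sup_of_orderOf_coprime (fun w hw ↦ ?_) hzsup
  rw [← (IsPrimitiveRoot.coe_units_iff.1 hz).eq_orderOf]
  exact (hW w hw).pow_right n

lemma orderOf_coprime_of_isPrimitiveRoot_prime {M : Type*} [CommMonoid M] {x : Mˣ} {p q : ℕ}
    (hp : p.Prime) (hq : q.Prime) (hpq : p ≠ q) (hx : IsPrimitiveRoot (x : M) p) :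
    (orderOf x).Coprime q := by
  rw [← (IsPrimitiveRoot.coe_units_iff.1 hx).eq_orderOf]
  exact (Nat.coprime_primes hp hq).2 hpq

lemma adjoin_setOf_isPrimitiveRoot {ζ : Ω} {n : ℕ} [NeZero n] (hζ : IsPrimitiveRoot ζ n) :
    adjoin K {x : Ω | IsPrimitiveRoot x n} = K⟮ζ⟯ := by
  refine le_antisymm (adjoin_le_iff.2 fun x hx ↦ ?_) (adjoin.mono _ _ _ (by simpa using hζ))
  obtain ⟨i, -, rfl⟩ := hζ.eq_pow_of_pow_eq_one hx.pow_eq_one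
  exact pow_mem (mem_adjoin_simple_self K ζ) i

lemma coprime_finrank_adjoin_of_isPrimitiveRoot {ζ : Ω} {ℓ : ℕ} (hℓ : ℓ.Prime)
    (hζ : IsPrimitiveRoot ζ ℓ) : (Module.finrank K K⟮ζ⟯).Coprime ℓ := by
  have hint : IsIntegral K ζ := (hζ.isIntegral hℓ.pos).tower_top
  have hle : Module.finrank K K⟮ζ⟯ ≤ ℓ - 1 := by
    rw [adjoin.finrank hint, ← Nat.totient_prime hℓ, ← Polynomial.natDegree_cyclotomic ℓ K]
    refine Polynomial.natDegree_le_of_dvd (minpoly.dvd K ζ ?_) (Polynomial.cyclotomic_ne_zero ℓ K)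
    rw [Polynomial.aeval_def, ← Polynomial.eval_map, Polynomial.map_cyclotomic]
    exact hζ.isRoot_cyclotomic hℓ.pos
  have hpos : 0 < Module.finrank K K⟮ζ⟯ := (adjoin.finrank hint).symm ▸ minpoly.natDegree_pos hint
  exact (Nat.coprime_of_lt_prime hpos.ne' (Nat.lt_of_le_pred hℓ.pos hle) hℓ).symm

lemma exists_pow_eq_of_coprime_finrank {L : Type*} [Ring L] [Algebra K L] {n : ℕ}
    (h : (Module.finrank K L).Coprime n) {a : K} {x : L} (hx : x ^ n = algebraMap K L a) :
    ∃ b : K, b ^ n = a :=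
  (pow_mem_range_pow_of_coprime h a).1
    ⟨Algebra.norm K x, by simp only [← map_pow, hx, Algebra.norm_algebraMap]⟩

lemma exists_mem_scalarUnits_pow_eq {L : IntermediateField K Ω} {n : ℕ} {u : Ωˣ}
    (hn : n ≠ 0) (hL : (Module.finrank K L).Coprime n) (hu : u ∈ scalarUnits L Ω)
    (hun : u ^ n ∈ scalarUnits K Ω) : ∃ v ∈ scalarUnits K Ω, v ^ n = u ^ n := by
  obtain ⟨x, hx⟩ := mem_scalarUnits.1 hu
  obtain ⟨a, ha⟩ := mem_scalarUnits.1 hun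
  have hxa : x ^ n = algebraMap K L a := by
    apply (algebraMap L Ω).injective
    rw [map_pow, hx, ← IsScalarTower.algebraMap_apply, ha, Units.val_pow_eq_pow_val]
  obtain ⟨b, hb⟩ := exists_pow_eq_of_coprime_finrank hL hxa
  have hbu : algebraMap K Ω b ^ n = (u : Ω) ^ n := by
    rw [← map_pow, hb, ha, Units.val_pow_eq_pow_val]
  have hb0 : algebraMap K Ω b ≠ 0 :=
    (pow_ne_zero_iff hn).1 (hbu ▸ pow_ne_zero n u.ne_zero)
  exact ⟨Units.mk0 _ hb0, mem_scalarUnits.2 ⟨b, rfl⟩, Units.ext hbu⟩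

lemma inf_scalarUnits_eq_sup_zpowers {L : IntermediateField K Ω} {Γ : Subgroup Ωˣ} {h : Ωˣ}
    {ℓ ε : ℕ} (hℓ : ℓ.Prime) (hL : (Module.finrank K L).Coprime ℓ) (hKΓ : scalarUnits K Ω ≤ Γ)
    (hΓ : ∀ u ∈ Γ, ∃ n, u ^ ℓ ^ n ∈ scalarUnits K Ω) (hh : IsPrimitiveRoot h (ℓ ^ ε))
    (hhΓ : h ∈ Γ ⊓ scalarUnits L Ω)
    (hmax : ∀ u ∈ Γ ⊓ scalarUnits L Ω, ¬ IsPrimitiveRoot u (ℓ ^ (ε + 1))) :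
    Γ ⊓ scalarUnits L Ω = scalarUnits K Ω ⊔ Subgroup.zpowers h := by
  refine le_antisymm (fun u hu ↦ ?_)
    (sup_le (le_inf hKΓ (scalarUnits_le_scalarUnits L)) (Subgroup.zpowers_le.2 hhΓ))
  obtain ⟨n, hn⟩ := hΓ u hu.1
  obtain ⟨v, hv, hvu⟩ :=
    exists_mem_scalarUnits_pow_eq (pow_ne_zero n hℓ.ne_zero) (hL.pow_right n) hu.2 hn
  have hz : (v⁻¹ * u) ^ ℓ ^ n = 1 := by rw [mul_pow, inv_pow, hvu, inv_mul_cancel]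
  have hzΓ : v⁻¹ * u ∈ Γ ⊓ scalarUnits L Ω :=
    mul_mem (inv_mem ⟨hKΓ hv, scalarUnits_le_scalarUnits L hv⟩) hu
  have hzε : (v⁻¹ * u) ^ ℓ ^ ε = 1 := by
    by_contra hne
    obtain ⟨j, hj⟩ := exists_orderOf_pow_eq_prime_pow hℓ hz hne
    exact hmax _ (pow_mem hzΓ j) (IsPrimitiveRoot.iff_orderOf.2 hj)
  have : NeZero (ℓ ^ ε) := ⟨pow_ne_zero ε hℓ.ne_zero⟩
  have hzh : v⁻¹ * u ∈ Subgroup.zpowers h := by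
    rw [hh.zpowers_eq]
    exact (mem_rootsOfUnity _ _).2 hzε
  exact (mul_inv_cancel_left v u) ▸ Subgroup.mul_mem_sup hv hzh

lemma disjoint_scalarUnits_zpowers {h : Ωˣ} {ℓ ε : ℕ} (hℓ : ℓ.Prime)
    (hK : ¬ ∃ ζ : K, IsPrimitiveRoot ζ ℓ) (hh : IsPrimitiveRoot h (ℓ ^ ε)) :
    Disjoint (scalarUnits K Ω) (Subgroup.zpowers h) := by
  rw [Subgroup.disjoint_def]
  intro u hu huh
  by_contra hne
  have : NeZero (ℓ ^ ε) := ⟨pow_ne_zero ε hℓ.ne_zero⟩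
  rw [hh.zpowers_eq, mem_rootsOfUnity] at huh
  obtain ⟨j, hj⟩ := exists_orderOf_pow_eq_prime_pow (e := 0) hℓ huh (by simpa using hne)
  obtain ⟨a, ha⟩ := mem_scalarUnits.1 (pow_mem hu j)
  rw [zero_add, pow_one, ← IsPrimitiveRoot.iff_orderOf, ← IsPrimitiveRoot.coe_units_iff, ← ha] at hj
  exact hK ⟨a, hj.of_map_of_injective (algebraMap K Ω).injective⟩

theorem relIndex_inf_scalarUnits_eq_pow {L : IntermediateField K Ω} {Γ : Subgroup Ωˣ} {h : Ωˣ}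
    {ℓ ε : ℕ} (hℓ : ℓ.Prime) (hK : ¬ ∃ ζ : K, IsPrimitiveRoot ζ ℓ)
    (hL : (Module.finrank K L).Coprime ℓ) (hKΓ : scalarUnits K Ω ≤ Γ)
    (hΓ : ∀ u ∈ Γ, ∃ n, u ^ ℓ ^ n ∈ scalarUnits K Ω) (hh : IsPrimitiveRoot h (ℓ ^ ε))
    (hhΓ : h ∈ Γ ⊓ scalarUnits L Ω)
    (hmax : ∀ u ∈ Γ ⊓ scalarUnits L Ω, ¬ IsPrimitiveRoot u (ℓ ^ (ε + 1))) :
    (scalarUnits K Ω).relIndex (Γ ⊓ scalarUnits L Ω) = ℓ ^ ε := by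
  rw [inf_scalarUnits_eq_sup_zpowers hℓ hL hKΓ hΓ hh hhΓ hmax, Subgroup.relIndex_sup_left,
    ← Subgroup.inf_relIndex_right, (disjoint_scalarUnits_zpowers hℓ hK hh).eq_bot,
    Subgroup.relIndex_bot_left, Nat.card_zpowers, hh.eq_orderOf]

end RootsOfUnity

section Main

variable {K Ω : Type*} [Field K] [Field Ω] [Algebra K Ω]

theorem finrank_adjoin_eq_finrank_mul_relIndex {L : IntermediateField K Ω} {H : Subgroup Ωˣ}
    (hL : L ≤ adjoin K (Units.val '' (H : Set Ωˣ)))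
    (hodd : Odd ((scalarUnits L Ω).relIndex H))
    (hζ : ∀ p : ℕ, p.Prime → p ∣ (scalarUnits L Ω).relIndex H → ∃ ζ : L, IsPrimitiveRoot ζ p) :
    Module.finrank K (adjoin K (Units.val '' (H : Set Ωˣ))) =
      Module.finrank K L * (scalarUnits L Ω).relIndex H := by
  rw [← finrank_adjoin_eq_relIndex hodd hζ, ← extendScalars_adjoin hL,
    ← relfinrank_eq_finrank_of_le hL, finrank_bot_mul_relfinrank hL]

theorem finrank_adjoin_mul_relIndex_inf {L : IntermediateField K Ω} {Γ : Subgroup Ωˣ}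
    {ℓ : ℕ} (hℓ : ℓ.Prime) (hℓodd : Odd ℓ) (hKΓ : scalarUnits K Ω ≤ Γ)
    (hΓ : ∃ m, (scalarUnits K Ω).relIndex Γ = ℓ ^ m)
    (hL : L ≤ adjoin K (Units.val '' (Γ : Set Ωˣ))) (hζ : ∃ ζ : L, IsPrimitiveRoot ζ ℓ) :
    Module.finrank K (adjoin K (Units.val '' (Γ : Set Ωˣ))) *
        (scalarUnits K Ω).relIndex (Γ ⊓ scalarUnits L Ω) =
      (scalarUnits K Ω).relIndex Γ * Module.finrank K L := by
  obtain ⟨m, hm⟩ := hΓ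
  have htower : (scalarUnits K Ω).relIndex (Γ ⊓ scalarUnits L Ω) *
      (scalarUnits L Ω).relIndex Γ = (scalarUnits K Ω).relIndex Γ := by
    rw [← Subgroup.inf_relIndex_left Γ]
    exact Subgroup.relIndex_mul_relIndex _ _ _
      (le_inf hKΓ (scalarUnits_le_scalarUnits L)) inf_le_left
  obtain ⟨r, -, hr⟩ := (Nat.dvd_prime_pow hℓ).1 (hm ▸ Dvd.intro_left _ htower)
  rw [finrank_adjoin_eq_finrank_mul_relIndex hL (hr ▸ hℓodd.pow) fun p hp hpr ↦ by
    rwa [(Nat.prime_dvd_prime_iff_eq hp hℓ).1 (hp.dvd_of_dvd_pow (hr ▸ hpr))], ← htower]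
  ring

theorem stmt12_general {ℓ ε : ℕ} {W Γ : Subgroup Ωˣ} (hℓ : ℓ.Prime) (hℓodd : Odd ℓ)
    (hK : ¬ ∃ z : K, IsPrimitiveRoot z ℓ) (hW : ∀ w ∈ W, (orderOf w).Coprime ℓ)
    (hKΓ : scalarUnits K Ω ≤ Γ) (hΓ : ∃ m, (scalarUnits K Ω).relIndex Γ = ℓ ^ m)
    (hζ : ∃ x ∈ scalarUnits K Ω ⊔ W ⊔ Γ, IsPrimitiveRoot (x : Ω) ℓ)
    (hε : ∃ x : Ωˣ, IsPrimitiveRoot (x : Ω) (ℓ ^ ε) ∧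
      x ∈ scalarUnits K Ω ⊔ W ⊔ Γ ∧ (x : Ω) ∈ adjoin K {x : Ω | IsPrimitiveRoot x ℓ})
    (hmax : ∀ x : Ωˣ, IsPrimitiveRoot (x : Ω) (ℓ ^ (ε + 1)) →
      ¬ (x ∈ scalarUnits K Ω ⊔ W ⊔ Γ ∧ (x : Ω) ∈ adjoin K {x : Ω | IsPrimitiveRoot x ℓ})) :
    Module.finrank K (adjoin K (Units.val '' (Γ : Set Ωˣ))) * ℓ ^ ε =
      (scalarUnits K Ω).relIndex Γ *
        Module.finrank K (adjoin K {x : Ω | IsPrimitiveRoot x ℓ}) ∧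
    (scalarUnits K Ω).relIndex
      (Γ ⊓ scalarUnits (adjoin K {x : Ω | IsPrimitiveRoot x ℓ}) Ω) = ℓ ^ ε := by
  have : NeZero ℓ := ⟨hℓ.ne_zero⟩
  obtain ⟨ζ, hζsup, hζℓ⟩ := hζ
  obtain ⟨h, hh, hhsup, hhL⟩ := hε
  have hζΓ : ζ ∈ Γ :=
    mem_of_isPrimitiveRoot_of_mem_sup (n := 1) hKΓ hW (by rwa [pow_one]) hζsup
  have hhΓ : h ∈ Γ := mem_of_isPrimitiveRoot_of_mem_sup hKΓ hW hh hhsup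
  rw [adjoin_setOf_isPrimitiveRoot hζℓ] at hhL hmax ⊢
  have hindex : (scalarUnits K Ω).relIndex (Γ ⊓ scalarUnits K⟮(ζ : Ω)⟯ Ω) = ℓ ^ ε := by
    obtain ⟨m, hm⟩ := hΓ
    refine relIndex_inf_scalarUnits_eq_pow hℓ hK
      (coprime_finrank_adjoin_of_isPrimitiveRoot hℓ hζℓ) hKΓ
      (fun u hu ↦ ⟨m, hm ▸ Subgroup.pow_relIndex_mem _ hu⟩) (IsPrimitiveRoot.coe_units_iff.1 hh)
      ⟨hhΓ, mem_scalarUnits_intermediateField.2 hhL⟩ fun u hu hprim ↦ ?_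
    exact hmax u (IsPrimitiveRoot.coe_units_iff.2 hprim)
      ⟨Subgroup.mem_sup_right hu.1, mem_scalarUnits_intermediateField.1 hu.2⟩
  have hζadj : K⟮(ζ : Ω)⟯ ≤ adjoin K (Units.val '' (Γ : Set Ωˣ)) :=
    adjoin_simple_le_iff.2 (subset_adjoin K _ ⟨ζ, hζΓ, rfl⟩)
  have hζL : IsPrimitiveRoot (AdjoinSimple.gen K (ζ : Ω)) ℓ :=
    IsPrimitiveRoot.of_map_of_injective (f := algebraMap K⟮(ζ : Ω)⟯ Ω) hζℓ Subtype.val_injective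
  exact ⟨hindex ▸ finrank_adjoin_mul_relIndex_inf hℓ hℓodd hKΓ hΓ hζadj ⟨_, hζL⟩, hindex⟩

end Main

lemma unitsIn_eq_scalarUnits {K : Type*} [Field K] (L : IntermediateField K (AlgebraicClosure K)) :
    unitsIn L = scalarUnits L (AlgebraicClosure K) :=
  Subgroup.ext fun _ ↦ mem_scalarUnits_intermediateField.symm

/-- Lemma 5.1 (second part): with `ℓ` an odd prime different from `char K`, `ζ_ℓ ∉ K`,
`ζ_ℓ ∈ Γ`, and `ε ≥ 1` the largest integer such that `ζ_{ℓ^ε} ∈ Γ ∩ K(ζ_ℓ)`, we have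
`[K(Γ_ℓ) : K(ζ_ℓ)] = |Γ_ℓ : K^×| ⬝ ℓ^{-ε}` (stated multiplied out) and
`|Γ_ℓ ∩ K(ζ_ℓ)^× : K^×| = ℓ^ε`. -/
theorem stmt12 (K : Type*) [Field K] (ℓ : ℕ) (hℓ : ℓ.Prime) (hℓodd : Odd ℓ)
    (hchar : ringChar K ≠ ℓ) (hnK : ¬ ∃ z : K, IsPrimitiveRoot z ℓ)
    (W : Subgroup (AlgebraicClosure K)ˣ)
    (hW : ∃ S : Set (AlgebraicClosure K)ˣ, S.Finite ∧
      (∀ x ∈ S, ∃ q : ℕ, q.Prime ∧ Odd q ∧ q ≠ ℓ ∧ q ≠ ringChar K ∧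
        IsPrimitiveRoot (x : AlgebraicClosure K) q) ∧ W = Subgroup.closure S)
    (Γℓ : Subgroup (AlgebraicClosure K)ˣ) (hΓK : baseUnits K ≤ Γℓ)
    (hidx : ∃ m : ℕ, Subgroup.relIndex (baseUnits K) Γℓ = ℓ ^ m)
    (hζΓ : ∃ x ∈ baseUnits K ⊔ W ⊔ Γℓ, IsPrimitiveRoot (x : AlgebraicClosure K) ℓ)
    (ε : ℕ) (hε1 : 1 ≤ ε)
    (hεin : ∃ x : (AlgebraicClosure K)ˣ, IsPrimitiveRoot (x : AlgebraicClosure K) (ℓ ^ ε) ∧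
      x ∈ baseUnits K ⊔ W ⊔ Γℓ ∧ (x : AlgebraicClosure K) ∈
        IntermediateField.adjoin K (primRoots K ℓ))
    (hεmax : ∀ x : (AlgebraicClosure K)ˣ,
      IsPrimitiveRoot (x : AlgebraicClosure K) (ℓ ^ (ε + 1)) →
      ¬ (x ∈ baseUnits K ⊔ W ⊔ Γℓ ∧ (x : AlgebraicClosure K) ∈
        IntermediateField.adjoin K (primRoots K ℓ))) :
    Module.finrank K (IntermediateField.adjoin K
        (Units.val '' (Γℓ : Set (AlgebraicClosure K)ˣ))) * ℓ ^ ε =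
      Subgroup.relIndex (baseUnits K) Γℓ *
        Module.finrank K (IntermediateField.adjoin K (primRoots K ℓ)) ∧
    Subgroup.relIndex (baseUnits K)
        (Γℓ ⊓ unitsIn (IntermediateField.adjoin K (primRoots K ℓ))) = ℓ ^ ε := by
  obtain ⟨S, -, hS, rfl⟩ := hW
  exact unitsIn_eq_scalarUnits (adjoin K (primRoots K ℓ)) ▸ stmt12_general hℓ hℓodd hnK
    (fun _ ↦ orderOf_coprime_of_mem_closure fun x hx ↦
      have ⟨_, hq, _, hqℓ, _, hxq⟩ := hS x hx
      orderOf_coprime_of_isPrimitiveRoot_prime hq hℓ hqℓ hxq)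
    hΓK hidx hζΓ hεin hεmax

end
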